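/- Fix δ ≥ 0, a symbol a of order 0, and the bump β. There exist ε₀ > 0 and, for each η ∈ C_c^∞(ℝ) supported in [π−2ε, π+2ε] with ε ∈ (0, ε₀], a constant C (depending on a, β, δ, η but not on j, ζ, r₁, r₂) such that for all j ≥ 1, all ζ ∈ ℝ and all r₁, r₂ > 0: | ∫_{π−2ε}^{π} e^{i ζ θ + i 2^j d_G(r₁,r₂;θ)} b(2^j, d_G(r₁,r₂;θ)) η(θ) dθ | ≤ C (2^j r₁ r₂)^{−1/2}, where d_G(r₁,r₂;θ) = √(r₁² + r₂² − 2 r₁ r₂ cos θ) and b(2^j, r) = β(r)(2^{−j} + r)^{−3/2−δ} a(2^j r). -/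

import Mathlib

open MeasureTheory Real Set intervalIntegral

noncomputable section

/-- Distance between planar points with polar coordinates, as a function of
`r₁, r₂` and the angle difference. -/
def dG (r₁ r₂ θ : ℝ) : ℝ := Real.sqrt (r₁ ^ 2 + r₂ ^ 2 - 2 * r₁ * r₂ * Real.cos θ)

/-- A symbol of order `0` on `(0, ∞)`. -/
def IsSymbol0 (a : ℝ → ℂ) : Prop :=
  ContDiffOn ℝ (⊤ : ℕ∞) a (Set.Ioi 0) ∧ (∃ M : ℝ, ∀ r > (0 : ℝ), ‖a r‖ ≤ M) ∧
    ∀ N : ℕ, ∃ C : ℝ, ∀ r > (0 : ℝ),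
      ‖iteratedDerivWithin N a (Set.Ioi 0) r‖ ≤ C * r ^ (-(N : ℝ))

/-- `b(2^j, r) = β(r) (2^{-j} + r)^{-3/2-δ} a(2^j r)`. -/
def bfun (δ : ℝ) (a : ℝ → ℂ) (β : ℝ → ℝ) (j : ℕ) (r : ℝ) : ℂ :=
  ((β r : ℝ) : ℂ) * ((((2 : ℝ) ^ (-(j : ℝ)) + r) ^ (-(3 / 2 + δ)) : ℝ) : ℂ) *
    a ((2 : ℝ) ^ (j : ℝ) * r)

/-
On the interval of integration `cos θ ≤ -κ < 0`, which makes `dG r₁ r₂` strictly concave in `θ`,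
with second derivative at most `-κ r₁ r₂ / dG`, and comparable at any two angles. The amplitude
vanishes unless `dG` is bounded at some angle, hence at every angle, so the phase has a second
derivative of size at least a multiple of `ω r₁ r₂`, where `ω = 2 ^ j`; the linear term `ζ θ` does
not affect it. The amplitude is `C¹` with bounds uniform in `ω`, because a symbol of order `0` is
invariant under dilation, and van der Corput's second-derivative test gives the decay
`(ω r₁ r₂) ^ (-1/2)`.
-/

section BoundedC1

variable {E : Type*} [NormedAddCommGroup E] [NormedSpace ℝ E]

/-- `f` is `C¹` at every point of `S`, with `M` and `K` bounding `f` and its derivative there.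
Recording the constants makes uniformity over a family of functions a matter of having the same
`M` and `K` for all members. -/
structure IsC1BoundedOn (f : ℝ → E) (S : Set ℝ) (M K : ℝ) : Prop where
  contDiffAt : ∀ t ∈ S, ContDiffAt ℝ 1 f t
  norm_le : ∀ t ∈ S, ‖f t‖ ≤ M
  norm_deriv_le : ∀ t ∈ S, ‖deriv f t‖ ≤ K

lemma continuousOn_deriv_of_contDiffAt {f : ℝ → E} {S : Set ℝ}
    (hf : ∀ t ∈ S, ContDiffAt ℝ 1 f t) : ContinuousOn (deriv f) S := fun t ht =>
  (((hf t ht).continuousAt_fderiv one_ne_zero).clm_apply continuousAt_const).continuousWithinAt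

lemma exists_isC1BoundedOn_of_isCompact {S : Set ℝ} (hS : IsCompact S) {f : ℝ → E}
    (hf : ∀ t ∈ S, ContDiffAt ℝ 1 f t) : ∃ M K, IsC1BoundedOn f S M K := by
  obtain ⟨M, hM⟩ := hS.exists_bound_of_continuousOn
    fun t ht => (hf t ht).continuousAt.continuousWithinAt
  obtain ⟨K, hK⟩ := hS.exists_bound_of_continuousOn (continuousOn_deriv_of_contDiffAt hf)
  exact ⟨M, K, hf, hM, hK⟩

namespace IsC1BoundedOn

variable {f : ℝ → E} {S : Set ℝ} {M K : ℝ}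

lemma hasDerivAt (hf : IsC1BoundedOn f S M K) {t : ℝ} (ht : t ∈ S) :
    HasDerivAt f (deriv f t) t :=
  ((hf.contDiffAt t ht).differentiableAt one_ne_zero).hasDerivAt

lemma continuousOn (hf : IsC1BoundedOn f S M K) : ContinuousOn f S := fun t ht =>
  (hf.contDiffAt t ht).continuousAt.continuousWithinAt

lemma continuousOn_deriv (hf : IsC1BoundedOn f S M K) : ContinuousOn (deriv f) S :=
  continuousOn_deriv_of_contDiffAt hf.contDiffAt

lemma mono {T : Set ℝ} (hf : IsC1BoundedOn f S M K) (hT : T ⊆ S) : IsC1BoundedOn f T M K :=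
  ⟨fun t ht => hf.contDiffAt t (hT ht), fun t ht => hf.norm_le t (hT ht),
    fun t ht => hf.norm_deriv_le t (hT ht)⟩

lemma mul {A : Type*} [NormedRing A] [NormedAlgebra ℝ A] {f g : ℝ → A} {M' K' : ℝ}
    (hf : IsC1BoundedOn f S M K) (hg : IsC1BoundedOn g S M' K') :
    IsC1BoundedOn (fun t => f t * g t) S (M * M') (K * M' + M * K') where
  contDiffAt t ht := (hf.contDiffAt t ht).mul (hg.contDiffAt t ht)
  norm_le t ht := norm_mul_le_of_le (hf.norm_le t ht) (hg.norm_le t ht)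
  norm_deriv_le t ht := by
    rw [((hf.hasDerivAt ht).fun_mul (hg.hasDerivAt ht)).deriv]
    exact norm_add_le_of_le (norm_mul_le_of_le (hf.norm_deriv_le t ht) (hg.norm_le t ht))
      (norm_mul_le_of_le (hf.norm_le t ht) (hg.norm_deriv_le t ht))

lemma comp {u : ℝ → ℝ} {T : Set ℝ} {L : ℝ} (hf : IsC1BoundedOn f S M K) (hu : MapsTo u T S)
    (hu_contDiff : ∀ t ∈ T, ContDiffAt ℝ 1 u t) (hu_deriv : ∀ t ∈ T, |deriv u t| ≤ L) :
    IsC1BoundedOn (fun t => f (u t)) T M (L * K) where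
  contDiffAt t ht := (hf.contDiffAt _ (hu ht)).comp t (hu_contDiff t ht)
  norm_le t ht := hf.norm_le _ (hu ht)
  norm_deriv_le t ht := by
    have hut := ((hu_contDiff t ht).differentiableAt one_ne_zero).hasDerivAt
    have hfu : HasDerivAt (fun t => f (u t)) (deriv u t • deriv f (u t)) t :=
      (hf.hasDerivAt (hu ht)).scomp t hut
    rw [hfu.deriv, norm_smul]
    exact mul_le_mul (hu_deriv t ht) (hf.norm_deriv_le _ (hu ht)) (norm_nonneg _)
      ((abs_nonneg _).trans (hu_deriv t ht))

lemma univ_of_support_subset (hf : IsC1BoundedOn f S M K) (hS : IsClosed S)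
    (hfS : Function.support f ⊆ S) : IsC1BoundedOn f univ |M| |K| := by
  have hzero : ∀ t ∉ S, f =ᶠ[nhds t] fun _ => 0 := fun t ht =>
    Filter.eventually_of_mem (hS.isOpen_compl.mem_nhds ht)
      fun u hu => Function.notMem_support.1 fun h => hu (hfS h)
  refine ⟨fun t _ => ?_, fun t _ => ?_, fun t _ => ?_⟩ <;> by_cases ht : t ∈ S
  · exact hf.contDiffAt t ht
  · exact contDiffAt_const.congr_of_eventuallyEq (hzero t ht)
  · exact (hf.norm_le t ht).trans (le_abs_self M)
  · simp [(hzero t ht).eq_of_nhds]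
  · exact (hf.norm_deriv_le t ht).trans (le_abs_self K)
  · simp [(hzero t ht).deriv_eq]

end IsC1BoundedOn

end BoundedC1

section VanDerCorput

variable {x y s : ℝ} {φ φ' φ'' : ℝ → ℝ}

-- The integrand `exp (iφ) (w' + i φ' w)` is the derivative of `exp (iφ) w`.
lemma norm_integral_exp_mul_le_of_norm_sub_le {A w w' : ℝ → ℂ} {ρ : ℝ → ℝ} (hxy : x ≤ y)
    (hφ : ∀ t ∈ Icc x y, HasDerivAt φ (φ' t) t) (hφ' : ContinuousOn φ' (Icc x y))
    (hw : ∀ t ∈ Icc x y, HasDerivAt w (w' t) t) (hw' : ContinuousOn w' (Icc x y))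
    (hA : ContinuousOn A (Icc x y)) (hρ : ContinuousOn ρ (Icc x y))
    (hAρ : ∀ t ∈ Icc x y, ‖A t - (w' t + Complex.I * φ' t * w t)‖ ≤ ρ t) :
    ‖∫ t in x..y, Complex.exp (Complex.I * φ t) * A t‖ ≤
      ‖w x‖ + ‖w y‖ + ∫ t in x..y, ρ t := by
  set e : ℝ → ℂ := fun t => Complex.exp (Complex.I * φ t) with he
  have he_deriv : ∀ t ∈ Icc x y, HasDerivAt e (e t * (Complex.I * φ' t)) t := fun t ht =>
    ((hφ t ht).ofReal_comp.const_mul Complex.I).cexp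
  have he_cont : ContinuousOn e (Icc x y) := fun t ht =>
    (he_deriv t ht).continuousAt.continuousWithinAt
  have hw_cont : ContinuousOn w (Icc x y) := fun t ht =>
    (hw t ht).continuousAt.continuousWithinAt
  have hφ'_cont : ContinuousOn (fun t => (φ' t : ℂ)) (Icc x y) :=
    Complex.continuous_ofReal.comp_continuousOn hφ'
  have hexact_cont : ContinuousOn (fun t => e t * (w' t + Complex.I * φ' t * w t)) (Icc x y) := by
    fun_prop
  have hexact : ∫ t in x..y, e t * (w' t + Complex.I * φ' t * w t) = e y * w y - e x * w x := by
    refine integral_eq_sub_of_hasDerivAt (f := fun t => e t * w t) (fun t ht => ?_)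
      (hexact_cont.intervalIntegrable_of_Icc hxy)
    rw [uIcc_of_le hxy] at ht
    exact ((he_deriv t ht).mul (hw t ht)).congr_deriv (by ring)
  have herror : ‖∫ t in x..y, e t * (A t - (w' t + Complex.I * φ' t * w t))‖ ≤
      ∫ t in x..y, ρ t := by
    refine norm_integral_le_of_norm_le hxy (.of_forall fun t ht => ?_)
      (hρ.intervalIntegrable_of_Icc hxy)
    rw [norm_mul, Complex.norm_exp_I_mul_ofReal, one_mul]
    exact hAρ t (Ioc_subset_Icc_self ht)
  have hsplit : ∫ t in x..y, e t * A t = (e y * w y - e x * w x) +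
      ∫ t in x..y, e t * (A t - (w' t + Complex.I * φ' t * w t)) := by
    simp only [mul_sub (e _)]
    have he_mul_A : ContinuousOn (fun t => e t * A t) (Icc x y) := by fun_prop
    rw [integral_sub (he_mul_A.intervalIntegrable_of_Icc hxy)
      (hexact_cont.intervalIntegrable_of_Icc hxy), hexact, add_sub_cancel]
  have hboundary : ‖e y * w y - e x * w x‖ ≤ ‖w x‖ + ‖w y‖ := by
    refine (norm_sub_le _ _).trans_eq ?_
    simp only [he, norm_mul, Complex.norm_exp_I_mul_ofReal, one_mul, add_comm]
  rw [hsplit]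
  exact norm_add_le_of_le hboundary herror

lemma abs_div_sq_add_sq_le (hs : 0 < s) (u : ℝ) : |u / (u ^ 2 + s ^ 2)| ≤ 1 / (2 * s) := by
  have hpos : 0 < u ^ 2 + s ^ 2 := by positivity
  rw [abs_div, abs_of_pos hpos, div_le_div_iff₀ hpos (by positivity)]
  nlinarith [sq_nonneg (|u| - s), sq_abs u]

lemma hasDerivAt_arctan_div_div {g : ℝ → ℝ} {g' t : ℝ} (hs : 0 < s)
    (hg : HasDerivAt g g' t) :
    HasDerivAt (fun t => arctan (g t / s) / s) (g' / (g t ^ 2 + s ^ 2)) t := by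
  refine ((HasDerivAt.arctan (hg.div_const s)).div_const s).congr_deriv ?_
  have : 0 < g t ^ 2 + s ^ 2 := by positivity
  field_simp
  ring

lemma hasDerivAt_div_sq_add_sq {g : ℝ → ℝ} {g' t : ℝ} (hs : 0 < s) (hg : HasDerivAt g g' t) :
    HasDerivAt (fun t => g t / (g t ^ 2 + s ^ 2))
      (g' * (s ^ 2 - g t ^ 2) / (g t ^ 2 + s ^ 2) ^ 2) t := by
  refine (hg.fun_div ((hg.fun_pow 2).add_const (s ^ 2)) (by positivity)).congr_deriv ?_
  congr 1
  norm_num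
  ring

lemma integral_abs_deriv_div_sq_add_sq_le {g g' : ℝ → ℝ} (hxy : x ≤ y) (hs : 0 < s)
    (hg : ∀ t ∈ Icc x y, HasDerivAt g (g' t) t) (hg' : ContinuousOn g' (Icc x y))
    (hg'_ne : ∀ t ∈ Icc x y, g' t ≠ 0) :
    ∫ t in x..y, |g' t| / (g t ^ 2 + s ^ 2) ≤ π / s := by
  wlog hpos : ∀ t ∈ Icc x y, 0 < g' t generalizing g g'
  · have hneg : ∀ t ∈ Icc x y, g' t < 0 :=
      (hasDerivWithinAt_forall_lt_or_forall_gt_of_forall_ne (convex_Icc x y)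
        (fun t ht => (hg t ht).hasDerivWithinAt) hg'_ne).resolve_right hpos
    simpa only [Pi.neg_apply, abs_neg, neg_sq] using this (g := -g) (g' := -g')
      (fun t ht => (hg t ht).neg) hg'.neg (fun t ht => neg_ne_zero.2 (hg'_ne t ht))
      fun t ht => neg_pos.2 (hneg t ht)
  have hg_cont : ContinuousOn g (Icc x y) := fun t ht =>
    (hg t ht).continuousAt.continuousWithinAt
  have hint : IntervalIntegrable (fun t => g' t / (g t ^ 2 + s ^ 2)) volume x y :=
    (hg'.div (by fun_prop) fun t _ => by positivity).intervalIntegrable_of_Icc hxy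
  calc ∫ t in x..y, |g' t| / (g t ^ 2 + s ^ 2) = ∫ t in x..y, g' t / (g t ^ 2 + s ^ 2) :=
        integral_congr fun t ht => by
          simp only [abs_of_pos (hpos t (uIcc_of_le hxy ▸ ht))]
    _ = arctan (g y / s) / s - arctan (g x / s) / s :=
        integral_eq_sub_of_hasDerivAt
          (fun t ht => hasDerivAt_arctan_div_div hs (hg t (uIcc_of_le hxy ▸ ht))) hint
    _ ≤ π / s := by
        rw [← sub_div]
        gcongr
        linarith [arctan_lt_pi_div_two (g y / s), neg_pi_div_two_lt_arctan (g x / s)]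

lemma abs_one_sub_mul_add_abs_deriv_le {u v : ℝ} (hs : 0 < s) (hv : s ^ 2 ≤ |v|) :
    |1 - u * (u / (u ^ 2 + s ^ 2))| + |v * (s ^ 2 - u ^ 2) / (u ^ 2 + s ^ 2) ^ 2| ≤
      2 * (|v| / (u ^ 2 + s ^ 2)) := by
  have hpos : 0 < u ^ 2 + s ^ 2 := by positivity
  have hone_sub : |1 - u * (u / (u ^ 2 + s ^ 2))| ≤ |v| / (u ^ 2 + s ^ 2) := by
    have : 1 - u * (u / (u ^ 2 + s ^ 2)) = s ^ 2 / (u ^ 2 + s ^ 2) := by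
      field_simp
      ring
    rw [this, abs_of_nonneg (by positivity)]
    gcongr
  have hsub : |s ^ 2 - u ^ 2| ≤ u ^ 2 + s ^ 2 :=
    abs_le.2 ⟨by linarith [sq_nonneg s], by linarith [sq_nonneg u]⟩
  have hquot : |v * (s ^ 2 - u ^ 2) / (u ^ 2 + s ^ 2) ^ 2| ≤ |v| / (u ^ 2 + s ^ 2) := by
    rw [abs_div, abs_mul, abs_of_pos (pow_pos hpos 2), sq (u ^ 2 + s ^ 2), ← div_mul_div_comm]
    exact mul_le_of_le_one_right (by positivity) ((div_le_one hpos).2 hsub)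
  rw [two_mul]
  exact add_le_add hone_sub hquot

lemma norm_integral_exp_mul_le_of_weight {q q' ρ : ℝ → ℝ} {A : ℝ → ℂ} {M K : ℝ} (hxy : x ≤ y)
    (hφ : ∀ t ∈ Icc x y, HasDerivAt φ (φ' t) t) (hφ' : ContinuousOn φ' (Icc x y))
    (hq : ∀ t ∈ Icc x y, HasDerivAt q (q' t) t) (hq' : ContinuousOn q' (Icc x y))
    (hA : IsC1BoundedOn A (Icc x y) M K) (hρ : ContinuousOn ρ (Icc x y))
    (hqρ : ∀ t ∈ Icc x y, M * (|1 - φ' t * q t| + |q' t|) + K * |q t| ≤ ρ t) :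
    ‖∫ t in x..y, Complex.exp (Complex.I * φ t) * A t‖ ≤
      M * |q x| + M * |q y| + ∫ t in x..y, ρ t := by
  set w : ℝ → ℂ := fun t => -Complex.I * (A t * q t)
  set w' : ℝ → ℂ := fun t => -Complex.I * (deriv A t * q t + A t * q' t)
  have hA_cont := hA.continuousOn
  have hA'_cont := hA.continuousOn_deriv
  have hq_cont : ContinuousOn (fun t => (q t : ℂ)) (Icc x y) := fun t ht =>
    (hq t ht).ofReal_comp.continuousAt.continuousWithinAt
  have hq'_cont : ContinuousOn (fun t => (q' t : ℂ)) (Icc x y) :=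
    Complex.continuous_ofReal.comp_continuousOn hq'
  have hw_deriv : ∀ t ∈ Icc x y, HasDerivAt w (w' t) t := fun t ht =>
    ((hA.hasDerivAt ht).mul (hq t ht).ofReal_comp).const_mul _
  have hw_norm : ∀ t ∈ Icc x y, ‖w t‖ ≤ M * |q t| := fun t ht => by
    rw [norm_mul, norm_neg, Complex.norm_I, one_mul]
    exact norm_mul_le_of_le (hA.norm_le t ht) (Complex.norm_real _).le
  have herror : ∀ t ∈ Icc x y, ‖A t - (w' t + Complex.I * φ' t * w t)‖ ≤ ρ t := fun t ht => by
    have hcancel : A t - (w' t + Complex.I * φ' t * w t) =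
        A t * ((1 - φ' t * q t : ℝ) + Complex.I * q' t) + deriv A t * (Complex.I * q t) := by
      push_cast
      linear_combination A t * φ' t * q t * Complex.I_sq
    have hcoeff : ‖((1 - φ' t * q t : ℝ) : ℂ) + Complex.I * q' t‖ ≤
        |1 - φ' t * q t| + |q' t| := by
      refine (norm_add_le _ _).trans_eq ?_
      simp only [norm_mul, Complex.norm_I, one_mul, Complex.norm_real, Real.norm_eq_abs]
    rw [hcancel]
    refine (norm_add_le_of_le (norm_mul_le_of_le (hA.norm_le t ht) hcoeff)
      (norm_mul_le_of_le (hA.norm_deriv_le t ht) ?_)).trans (hqρ t ht)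
    simp only [norm_mul, Complex.norm_I, one_mul, Complex.norm_real, Real.norm_eq_abs, le_refl]
  refine (norm_integral_exp_mul_le_of_norm_sub_le hxy hφ hφ' hw_deriv (by fun_prop) hA_cont hρ
    herror).trans ?_
  gcongr
  exacts [hw_norm x (left_mem_Icc.2 hxy), hw_norm y (right_mem_Icc.2 hxy)]

/- Integration by parts against `1 / φ'` breaks down where `φ' = 0`; the regularisation
`q = φ' / (φ'² + s²)` is bounded by `1 / (2s)` and leaves an error `O(|φ''| / (φ'² + s²))`, whose
integral is an increment of `arctan (φ' / s) / s`. -/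
theorem norm_integral_exp_mul_le_of_sq_le_abs_deriv2 {A : ℝ → ℂ} {M K : ℝ} (hxy : x ≤ y)
    (hs : 0 < s) (hφ : ∀ t ∈ Icc x y, HasDerivAt φ (φ' t) t)
    (hφ' : ∀ t ∈ Icc x y, HasDerivAt φ' (φ'' t) t) (hφ'' : ContinuousOn φ'' (Icc x y))
    (hsφ'' : ∀ t ∈ Icc x y, s ^ 2 ≤ |φ'' t|) (hA : IsC1BoundedOn A (Icc x y) M K) :
    ‖∫ t in x..y, Complex.exp (Complex.I * φ t) * A t‖ ≤
      ((1 + 2 * π) * M + K * (y - x) / 2) / s := by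
  have hx : x ∈ Icc x y := left_mem_Icc.2 hxy
  have hM : 0 ≤ M := (norm_nonneg _).trans (hA.norm_le x hx)
  have hK : 0 ≤ K := (norm_nonneg _).trans (hA.norm_deriv_le x hx)
  have hpos : ∀ t, 0 < φ' t ^ 2 + s ^ 2 := fun t => by positivity
  have hφ''_ne : ∀ t ∈ Icc x y, φ'' t ≠ 0 := fun t ht =>
    abs_pos.1 ((pow_pos hs 2).trans_le (hsφ'' t ht))
  have hφ'_cont : ContinuousOn φ' (Icc x y) := fun t ht =>
    (hφ' t ht).continuousAt.continuousWithinAt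
  have hquot_cont : ContinuousOn (fun t => |φ'' t| / (φ' t ^ 2 + s ^ 2)) (Icc x y) :=
    hφ''.abs.div (by fun_prop) fun t _ => (hpos t).ne'
  have hq'_cont : ContinuousOn (fun t => φ'' t * (s ^ 2 - φ' t ^ 2) / (φ' t ^ 2 + s ^ 2) ^ 2)
      (Icc x y) :=
    ContinuousOn.div (by fun_prop) (by fun_prop) fun t _ => (pow_pos (hpos t) 2).ne'
  set ρ : ℝ → ℝ := fun t => M * (2 * (|φ'' t| / (φ' t ^ 2 + s ^ 2))) + K * (1 / (2 * s)) with hρ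
  have hρ_le : ∀ t ∈ Icc x y,
      M * (|1 - φ' t * (φ' t / (φ' t ^ 2 + s ^ 2))| +
        |φ'' t * (s ^ 2 - φ' t ^ 2) / (φ' t ^ 2 + s ^ 2) ^ 2|) +
        K * |φ' t / (φ' t ^ 2 + s ^ 2)| ≤ ρ t := fun t ht => by
    simp only [hρ]
    gcongr
    exacts [abs_one_sub_mul_add_abs_deriv_le hs (hsφ'' t ht), abs_div_sq_add_sq_le hs _]
  have hρ_integral : ∫ t in x..y, ρ t ≤ M * (2 * (π / s)) + (y - x) * (K * (1 / (2 * s))) := by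
    rw [integral_add (ContinuousOn.intervalIntegrable_of_Icc hxy (by fun_prop))
      intervalIntegrable_const, intervalIntegral.integral_const_mul,
      intervalIntegral.integral_const_mul, intervalIntegral.integral_const, smul_eq_mul]
    gcongr
    exact integral_abs_deriv_div_sq_add_sq_le hxy hs hφ' hφ'' hφ''_ne
  calc _ ≤ M * |φ' x / (φ' x ^ 2 + s ^ 2)| + M * |φ' y / (φ' y ^ 2 + s ^ 2)| + ∫ t in x..y, ρ t :=
        norm_integral_exp_mul_le_of_weight hxy hφ hφ'_cont
          (fun t ht => hasDerivAt_div_sq_add_sq hs (hφ' t ht)) hq'_cont hA (by fun_prop) hρ_le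
    _ ≤ M * (1 / (2 * s)) + M * (1 / (2 * s)) +
        (M * (2 * (π / s)) + (y - x) * (K * (1 / (2 * s)))) := by
        gcongr <;> exact abs_div_sq_add_sq_le hs _
    _ = ((1 + 2 * π) * M + K * (y - x) / 2) / s := by field_simp; ring

end VanDerCorput

section PolarDistance

variable {r₁ r₂ θ : ℝ}

/-- The derivative of `dG r₁ r₂` with respect to the angle, valid where `dG r₁ r₂ θ ≠ 0`. -/
def dGDeriv (r₁ r₂ θ : ℝ) : ℝ := r₁ * r₂ * sin θ / dG r₁ r₂ θ

lemma sq_dG (r₁ r₂ θ : ℝ) : dG r₁ r₂ θ ^ 2 = r₁ ^ 2 + r₂ ^ 2 - 2 * r₁ * r₂ * cos θ :=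
  sq_sqrt (by nlinarith [sq_nonneg (r₁ - r₂ * cos θ), sq_nonneg (r₂ * sin θ), sin_sq_add_cos_sq θ])

lemma dG_nonneg (r₁ r₂ θ : ℝ) : 0 ≤ dG r₁ r₂ θ := sqrt_nonneg _

lemma contDiffAt_dG {n : WithTop ℕ∞} (hd : dG r₁ r₂ θ ≠ 0) : ContDiffAt ℝ n (dG r₁ r₂) θ := by
  refine ContDiffAt.sqrt (by fun_prop) ?_
  rw [← sq_dG]
  exact pow_ne_zero 2 hd

lemma hasDerivAt_dG (hd : dG r₁ r₂ θ ≠ 0) :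
    HasDerivAt (dG r₁ r₂) (dGDeriv r₁ r₂ θ) θ := by
  have hradicand : r₁ ^ 2 + r₂ ^ 2 - 2 * r₁ * r₂ * cos θ ≠ 0 := by
    rw [← sq_dG]
    exact pow_ne_zero 2 hd
  have hsqrt := (((hasDerivAt_cos θ).const_mul (2 * r₁ * r₂)).const_sub
    (r₁ ^ 2 + r₂ ^ 2)).sqrt hradicand
  refine hsqrt.congr_deriv ?_
  rw [← dG, dGDeriv]
  field_simp

lemma hasDerivAt_dGDeriv (hd : dG r₁ r₂ θ ≠ 0) :
    HasDerivAt (dGDeriv r₁ r₂) ((r₁ * r₂ * cos θ - dGDeriv r₁ r₂ θ ^ 2) / dG r₁ r₂ θ) θ := by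
  refine (((hasDerivAt_sin θ).const_mul (r₁ * r₂)).div (hasDerivAt_dG hd) hd).congr_deriv ?_
  rw [dGDeriv]
  field_simp

lemma sq_add_sq_le_sq_dG (hr : 0 ≤ r₁ * r₂) (hθ : cos θ ≤ 0) :
    r₁ ^ 2 + r₂ ^ 2 ≤ dG r₁ r₂ θ ^ 2 := by
  rw [sq_dG]
  nlinarith

lemma dG_pos (hr : 0 < r₁ * r₂) (hθ : cos θ ≤ 0) : 0 < dG r₁ r₂ θ := by
  have : 0 < dG r₁ r₂ θ ^ 2 := by
    nlinarith [sq_add_sq_le_sq_dG hr.le hθ, sq_nonneg (r₁ - r₂)]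
  exact (dG_nonneg r₁ r₂ θ).lt_of_ne' (pow_ne_zero_iff two_ne_zero |>.1 this.ne')

lemma dG_le_two_mul_dG (hr : 0 ≤ r₁ * r₂) (hθ : cos θ ≤ 0) (t : ℝ) :
    dG r₁ r₂ t ≤ 2 * dG r₁ r₂ θ := by
  refine le_of_sq_le_sq ?_ (mul_nonneg zero_le_two (dG_nonneg _ _ _))
  nlinarith [sq_dG r₁ r₂ t, sq_add_sq_le_sq_dG hr hθ, neg_one_le_cos t, sq_nonneg (r₁ - r₂)]

lemma abs_dGDeriv_le (hr : 0 ≤ r₁ * r₂) (hθ : cos θ ≤ 0) :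
    |dGDeriv r₁ r₂ θ| ≤ dG r₁ r₂ θ := by
  rw [dGDeriv, abs_div, abs_mul, abs_of_nonneg hr, abs_of_nonneg (dG_nonneg _ _ _)]
  refine div_le_of_le_mul₀ (dG_nonneg _ _ _) (dG_nonneg _ _ _) ?_
  calc r₁ * r₂ * |sin θ| ≤ r₁ * r₂ := mul_le_of_le_one_right hr (abs_sin_le_one θ)
    _ ≤ dG r₁ r₂ θ * dG r₁ r₂ θ := by
      nlinarith [sq_add_sq_le_sq_dG hr hθ, sq_nonneg (r₁ - r₂)]

/- The second angular derivative of `dG` is negative here, since `cos θ < 0` reinforces the term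
`-dGDeriv² / dG`. -/
lemma mul_div_le_abs_deriv2_dG {κ D : ℝ} (hr : 0 < r₁ * r₂) (hκ : 0 ≤ κ) (hθ : cos θ ≤ -κ)
    (hD : dG r₁ r₂ θ ≤ D) :
    κ * (r₁ * r₂) / D ≤ |(r₁ * r₂ * cos θ - dGDeriv r₁ r₂ θ ^ 2) / dG r₁ r₂ θ| := by
  have hd : 0 < dG r₁ r₂ θ := dG_pos hr (by linarith)
  have hnum : κ * (r₁ * r₂) ≤ |r₁ * r₂ * cos θ - dGDeriv r₁ r₂ θ ^ 2| :=
    le_abs.2 (.inr (by nlinarith [sq_nonneg (dGDeriv r₁ r₂ θ)]))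
  rw [abs_div, abs_of_pos hd]
  gcongr

end PolarDistance

section Amplitude

/-- The amplitude `β r (ω⁻¹ + r)^p a (ω r)` at frequency `ω`: the `b` of the theorem for an
arbitrary exponent `p` and a real frequency in place of `2 ^ j`. -/
def rescaledAmplitude (p : ℝ) (a β : ℝ → ℂ) (ω r : ℝ) : ℂ :=
  β r * ((ω⁻¹ + r) ^ p : ℝ) * a (ω * r)

variable {a β : ℝ → ℂ} {c d M N : ℝ}

lemma bfun_eq_rescaledAmplitude (δ : ℝ) (a : ℝ → ℂ) (β : ℝ → ℝ) (j : ℕ) (r : ℝ) :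
    bfun δ a β j r =
      rescaledAmplitude (-(3 / 2 + δ)) a (fun r => (β r : ℂ)) ((2 : ℝ) ^ (j : ℝ)) r := by
  rw [bfun, rescaledAmplitude, rpow_neg zero_le_two]

lemma isC1BoundedOn_comp_mul_left {ω : ℝ} (hω : 0 < ω) (hc : 0 < c)
    (ha : ContDiffOn ℝ 1 a (Ioi 0)) (haM : ∀ r > 0, ‖a r‖ ≤ M)
    (haN : ∀ r > 0, r * ‖deriv a r‖ ≤ N) :
    IsC1BoundedOn (fun r => a (ω * r)) (Ici c) M (N / c) where
  contDiffAt r hr := (ha.contDiffAt (Ioi_mem_nhds (mul_pos hω (hc.trans_le hr)))).comp r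
    (by fun_prop)
  norm_le r hr := haM _ (mul_pos hω (hc.trans_le hr))
  norm_deriv_le r hr := by
    have hr0 : 0 < r := hc.trans_le hr
    rw [deriv_comp_mul_left, norm_smul, Real.norm_of_nonneg hω.le, le_div_iff₀ hc]
    calc ω * ‖deriv a (ω * r)‖ * c ≤ ω * ‖deriv a (ω * r)‖ * r := by gcongr; exact hr
      _ = ω * r * ‖deriv a (ω * r)‖ := by ring
      _ ≤ N := haN _ (mul_pos hω hr0)

lemma exists_isC1BoundedOn_inv_add_rpow (p : ℝ) (hc : 0 < c) :
    ∃ M K, ∀ ω, 1 ≤ ω → IsC1BoundedOn (fun r => (((ω⁻¹ + r) ^ p : ℝ) : ℂ)) (Icc c d) M K := by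
  obtain ⟨M, K, hMK⟩ := exists_isC1BoundedOn_of_isCompact (isCompact_Icc (a := c) (b := 1 + d))
    (f := fun u => ((u ^ p : ℝ) : ℂ)) fun u hu => Complex.ofRealCLM.contDiff.contDiffAt.comp u
      (contDiffAt_rpow_const_of_ne (hc.trans_le hu.1).ne')
  refine ⟨M, 1 * K, fun ω hω => hMK.comp (fun r hr => ?_) (fun r _ => by fun_prop)
    fun r _ => by simp⟩
  have hω_inv : 0 < ω⁻¹ := by positivity
  exact ⟨by linarith [hr.1], by linarith [hr.2, inv_le_one_of_one_le₀ hω]⟩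

lemma support_rescaledAmplitude_subset (p : ℝ) (a β : ℝ → ℂ) (ω : ℝ) :
    Function.support (rescaledAmplitude p a β ω) ⊆ Function.support β := fun r hr hβr =>
  hr (by rw [rescaledAmplitude, hβr, zero_mul, zero_mul])

lemma exists_isC1BoundedOn_rescaledAmplitude (p : ℝ) (ha : ContDiffOn ℝ 1 a (Ioi 0))
    (haM : ∀ r > 0, ‖a r‖ ≤ M) (haN : ∀ r > 0, r * ‖deriv a r‖ ≤ N) (hβ : ContDiff ℝ 1 β)
    (hc : 0 < c) (hβs : Function.support β ⊆ Icc c d) :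
    ∃ P Q, ∀ ω, 1 ≤ ω → IsC1BoundedOn (rescaledAmplitude p a β ω) univ P Q := by
  obtain ⟨M₁, K₁, hβ_bounded⟩ :=
    exists_isC1BoundedOn_of_isCompact (isCompact_Icc (a := c) (b := d)) fun r _ => hβ.contDiffAt
  obtain ⟨M₂, K₂, hpow_bounded⟩ := exists_isC1BoundedOn_inv_add_rpow (d := d) p hc
  have ha_bounded : ∀ ω, 1 ≤ ω → IsC1BoundedOn (fun r => a (ω * r)) (Icc c d) M (N / c) :=
    fun ω hω => (isC1BoundedOn_comp_mul_left (zero_lt_one.trans_le hω) hc ha haM haN).mono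
      Icc_subset_Ici_self
  exact ⟨_, _, fun ω hω => IsC1BoundedOn.univ_of_support_subset (f := rescaledAmplitude p a β ω)
    ((hβ_bounded.mul (hpow_bounded ω hω)).mul (ha_bounded ω hω)) isClosed_Icc
    ((support_rescaledAmplitude_subset p a β ω).trans hβs)⟩

end Amplitude

section OscillatoryIntegral

variable {b η : ℝ → ℂ} {x y κ D ω ζ r₁ r₂ P Q P' Q' : ℝ}

lemma isC1BoundedOn_comp_dG_mul (hr : 0 < r₁ * r₂) (hcos : ∀ θ ∈ Icc x y, cos θ ≤ 0)
    (hD : ∀ θ ∈ Icc x y, dG r₁ r₂ θ ≤ D) (hb : IsC1BoundedOn b univ P Q)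
    (hη : IsC1BoundedOn η (Icc x y) P' Q') :
    IsC1BoundedOn (fun θ => b (dG r₁ r₂ θ) * η θ) (Icc x y) (P * P')
      (D * Q * P' + P * Q') := by
  have hd : ∀ θ ∈ Icc x y, dG r₁ r₂ θ ≠ 0 := fun θ hθ => (dG_pos hr (hcos θ hθ)).ne'
  refine (hb.comp (mapsTo_univ _ _) (fun θ hθ => contDiffAt_dG (hd θ hθ)) fun θ hθ => ?_).mul hη
  rw [(hasDerivAt_dG (hd θ hθ)).deriv]
  exact (abs_dGDeriv_le hr.le (hcos θ hθ)).trans (hD θ hθ)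

lemma norm_integral_exp_dG_mul_le (hxy : x ≤ y) (hκ : 0 < κ)
    (hcos : ∀ θ ∈ Icc x y, cos θ ≤ -κ) (hω : 0 < ω) (hr : 0 < r₁ * r₂)
    (hD : ∀ θ ∈ Icc x y, dG r₁ r₂ θ ≤ D) (hb : IsC1BoundedOn b univ P Q)
    (hη : IsC1BoundedOn η (Icc x y) P' Q') :
    ‖∫ θ in x..y, Complex.exp (Complex.I * (ζ * θ + ω * dG r₁ r₂ θ : ℝ)) *
        (b (dG r₁ r₂ θ) * η θ)‖ ≤
      ((1 + 2 * π) * (P * P') + (D * Q * P' + P * Q') * (y - x) / 2) /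
        √(κ / D * (ω * r₁ * r₂)) := by
  have hcos_nonpos : ∀ θ ∈ Icc x y, cos θ ≤ 0 := fun θ hθ => (hcos θ hθ).trans (by linarith)
  have hd : ∀ θ ∈ Icc x y, 0 < dG r₁ r₂ θ := fun θ hθ => dG_pos hr (hcos_nonpos θ hθ)
  have hD_pos : 0 < D := (hd x (left_mem_Icc.2 hxy)).trans_le (hD x (left_mem_Icc.2 hxy))
  have hfreq : 0 < κ / D * (ω * r₁ * r₂) := by rw [mul_assoc ω]; positivity
  have hphase : ∀ θ ∈ Icc x y, HasDerivAt (fun θ => ζ * θ + ω * dG r₁ r₂ θ)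
      (ζ + ω * dGDeriv r₁ r₂ θ) θ := fun θ hθ =>
    (((hasDerivAt_id θ).const_mul ζ).add ((hasDerivAt_dG (hd θ hθ).ne').const_mul ω)).congr_deriv
      (by rw [mul_one])
  have hphase' : ∀ θ ∈ Icc x y, HasDerivAt (fun θ => ζ + ω * dGDeriv r₁ r₂ θ)
      (ω * ((r₁ * r₂ * cos θ - dGDeriv r₁ r₂ θ ^ 2) / dG r₁ r₂ θ)) θ := fun θ hθ =>
    ((hasDerivAt_dGDeriv (hd θ hθ).ne').const_mul ω).const_add ζ
  have hdG_cont : ContinuousOn (dG r₁ r₂) (Icc x y) := fun θ hθ =>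
    (hasDerivAt_dG (hd θ hθ).ne').continuousAt.continuousWithinAt
  have hdGDeriv_cont : ContinuousOn (dGDeriv r₁ r₂) (Icc x y) := fun θ hθ =>
    (hasDerivAt_dGDeriv (hd θ hθ).ne').continuousAt.continuousWithinAt
  refine norm_integral_exp_mul_le_of_sq_le_abs_deriv2 hxy (sqrt_pos.2 hfreq) hphase hphase'
    (continuousOn_const.mul (ContinuousOn.div (by fun_prop) hdG_cont fun θ hθ => (hd θ hθ).ne'))
    (fun θ hθ => ?_) (isC1BoundedOn_comp_dG_mul hr hcos_nonpos hD hb hη)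
  rw [sq_sqrt hfreq.le, abs_mul, abs_of_pos hω]
  calc κ / D * (ω * r₁ * r₂) = ω * (κ * (r₁ * r₂) / D) := by ring
    _ ≤ _ := by
      gcongr
      exact mul_div_le_abs_deriv2_dG hr hκ.le (hcos θ hθ) (hD θ hθ)

lemma exists_pos_forall_cos_le_neg (hx : π / 2 < x) (hxy : x ≤ y) (hy : y < π + π / 2) :
    ∃ κ > 0, ∀ θ ∈ Icc x y, cos θ ≤ -κ := by
  obtain ⟨θ₀, hθ₀, hmax⟩ := isCompact_Icc.exists_isMaxOn (nonempty_Icc.2 hxy)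
    continuous_cos.continuousOn
  exact ⟨-cos θ₀, neg_pos.2 (cos_neg_of_pi_div_two_lt_of_lt (hx.trans_le hθ₀.1)
    (hθ₀.2.trans_lt hy)), fun θ hθ => (hmax hθ).trans_eq (neg_neg _).symm⟩

theorem stmt18_general (p : ℝ) {a β η : ℝ → ℂ} {c d M N : ℝ} (ha : ContDiffOn ℝ 1 a (Ioi 0))
    (haM : ∀ r > 0, ‖a r‖ ≤ M) (haN : ∀ r > 0, r * ‖deriv a r‖ ≤ N) (hβ : ContDiff ℝ 1 β)
    (hc : 0 < c) (hβs : Function.support β ⊆ Icc c d) (hη : ContDiff ℝ 1 η)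
    (hx : π / 2 < x) (hxy : x ≤ y) (hy : y < π + π / 2) :
    ∃ C : ℝ, ∀ ω ζ r₁ r₂ : ℝ, 1 ≤ ω → 0 < r₁ * r₂ →
      ‖∫ θ in x..y, Complex.exp (Complex.I * (ζ * θ + ω * dG r₁ r₂ θ : ℝ)) *
          rescaledAmplitude p a β ω (dG r₁ r₂ θ) * η θ‖ ≤
        C * (ω * r₁ * r₂) ^ (-(1 : ℝ) / 2) := by
  obtain ⟨κ, hκ, hcos⟩ := exists_pos_forall_cos_le_neg hx hxy hy
  obtain ⟨P, Q, hb⟩ := exists_isC1BoundedOn_rescaledAmplitude p ha haM haN hβ hc hβs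
  obtain ⟨P', Q', hη_bounded⟩ :=
    exists_isC1BoundedOn_of_isCompact (isCompact_Icc (a := x) (b := y)) fun θ _ => hη.contDiffAt
  set K := (1 + 2 * π) * (P * P') + (2 * d * Q * P' + P * Q') * (y - x) / 2
  refine ⟨|K / √(κ / (2 * d))|, fun ω ζ r₁ r₂ hω hr => ?_⟩
  have hωr : 0 < ω * r₁ * r₂ := by rw [mul_assoc]; positivity
  by_cases hnear : ∃ t ∈ Icc x y, dG r₁ r₂ t ≤ d
  · obtain ⟨t, ht, htd⟩ := hnear
    have hcos_t : cos t ≤ 0 := (hcos t ht).trans (by linarith)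
    have hd : 0 < d := (dG_pos hr hcos_t).trans_le htd
    have hdG_le : ∀ θ ∈ Icc x y, dG r₁ r₂ θ ≤ 2 * d := fun θ _ =>
      (dG_le_two_mul_dG hr.le hcos_t θ).trans (by linarith)
    simp only [mul_assoc (Complex.exp _)]
    calc _ ≤ K / √(κ / (2 * d) * (ω * r₁ * r₂)) :=
          norm_integral_exp_dG_mul_le hxy hκ hcos (by linarith) hr hdG_le (hb ω hω) hη_bounded
      _ = K / √(κ / (2 * d)) * (ω * r₁ * r₂) ^ (-(1 : ℝ) / 2) := by
          rw [sqrt_mul (by positivity), neg_div, rpow_neg hωr.le, ← sqrt_eq_rpow, ← div_div,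
            div_eq_mul_inv _ √(ω * r₁ * r₂)]
      _ ≤ _ := by gcongr; exact le_abs_self _
  · push Not at hnear
    have hzero : ∀ θ ∈ uIcc x y, Complex.exp (Complex.I * (ζ * θ + ω * dG r₁ r₂ θ : ℝ)) *
        rescaledAmplitude p a β ω (dG r₁ r₂ θ) * η θ = 0 := fun θ hθ => by
      have : dG r₁ r₂ θ ∉ Function.support (rescaledAmplitude p a β ω) := fun h =>
        (hnear θ (uIcc_of_le hxy ▸ hθ)).not_ge
          (hβs (support_rescaledAmplitude_subset p a β ω h)).2
      rw [Function.notMem_support.1 this, mul_zero, zero_mul]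
    rw [integral_congr hzero, intervalIntegral.integral_zero, norm_zero]
    positivity

end OscillatoryIntegral

lemma IsSymbol0.exists_deriv_bound {a : ℝ → ℂ} (ha : IsSymbol0 a) :
    ∃ N, ∀ r > 0, r * ‖deriv a r‖ ≤ N := by
  obtain ⟨N, hN⟩ := ha.2.2 1
  refine ⟨N, fun r hr => ?_⟩
  have hr_bound := hN r hr
  rwa [iteratedDerivWithin_one, derivWithin_of_isOpen isOpen_Ioi hr, Nat.cast_one, rpow_neg_one,
    ← div_eq_mul_inv, le_div_iff₀' hr] at hr_bound

theorem stmt18 (δ : ℝ) (hδ : 0 ≤ δ) (a : ℝ → ℂ) (ha : IsSymbol0 a)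
    (β : ℝ → ℝ) (hβ : ContDiff ℝ (⊤ : ℕ∞) β)
    (hβs : Function.support β ⊆ Set.Icc (3 / 8) (4 / 3)) :
    ∃ ε₀ : ℝ, 0 < ε₀ ∧ ∀ ε : ℝ, 0 < ε → ε ≤ ε₀ →
      ∀ η : ℝ → ℝ, ContDiff ℝ (⊤ : ℕ∞) η →
        Function.support η ⊆ Set.Icc (Real.pi - 2 * ε) (Real.pi + 2 * ε) →
        ∃ C : ℝ, ∀ (j : ℕ), 1 ≤ j → ∀ ζ r₁ r₂ : ℝ, 0 < r₁ → 0 < r₂ →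
          ‖∫ θ in (Real.pi - 2 * ε)..Real.pi,
              Complex.exp (Complex.I *
                ((ζ * θ + (2 : ℝ) ^ (j : ℝ) * dG r₁ r₂ θ : ℝ) : ℂ)) *
                bfun δ a β j (dG r₁ r₂ θ) * ((η θ : ℝ) : ℂ)‖ ≤
            C * ((2 : ℝ) ^ (j : ℝ) * r₁ * r₂) ^ (-(1 : ℝ) / 2) := by
  obtain ⟨N, haN⟩ := ha.exists_deriv_bound
  obtain ⟨M, haM⟩ := ha.2.1
  refine ⟨1 / 2, by norm_num, fun ε hε hε₀ η hη _ => ?_⟩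
  obtain ⟨C, hC⟩ := stmt18_general (-(3 / 2 + δ)) (β := fun r => β r) (η := fun θ => η θ)
    (c := 3 / 8) (d := 4 / 3) (x := π - 2 * ε) (y := π)
    (ha.1.of_le (by simp)) haM haN (Complex.ofRealCLM.contDiff.comp (hβ.of_le (by simp)))
    (by norm_num) (by simpa [Function.support] using hβs)
    (Complex.ofRealCLM.contDiff.comp (hη.of_le (by simp)))
    (by linarith [pi_gt_three]) (by linarith) (by linarith [pi_pos])
  refine ⟨C, fun j _ ζ r₁ r₂ hr₁ hr₂ => ?_⟩
  simpa only [bfun_eq_rescaledAmplitude] using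
    hC _ ζ r₁ r₂ (one_le_rpow one_le_two j.cast_nonneg) (mul_pos hr₁ hr₂)

end
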